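/- Let φ : ℝ → ℝ be the clamp function. Let Z₁ and Z₂ be independent standard Gaussian random variables, let σ > 0 and ρ ∈ [−1, 1], and set X = σZ₁ and Y = σ(ρZ₁ + √(1−ρ²) Z₂). Then lim_{L → ∞} E[φ(L X) · φ(L Y)] = (2/π) · arcsin(ρ). -/

import Mathlib

open MeasureTheory ProbabilityTheory Filter

/-- The clamp function: `-1` for `x ≤ -1`, `x` for `-1 < x < 1`, `1` for `x ≥ 1`. -/
noncomputable def clamp (x : ℝ) : ℝ := if x ≤ -1 then -1 else if x < 1 then x else 1

/-!
As `L → ∞`, `clamp (L x)` converges boundedly to `sign x`, so the limit is `E[sign (X Y)]`. Write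
`ρ = sin α`. In polar coordinates `Z₁ = r cos θ`, `Z₂ = r sin θ`, the angle `θ` is uniform and
independent of `r`, and `X Y` is a positive multiple of `cos θ sin (θ + α)`. This function is
`π`-periodic, and on `(-π/2, π/2)` it is negative exactly on the arc below `-α`, so that its sign
has mean `2α / π`.
-/

open SignType (sign)
open Set (Icc Ioi)
open scoped NNReal Real Topology

section Sign

lemma measurable_coe_sign : Measurable fun x : ℝ ↦ (sign x : ℝ) := by
  have coe_sign_eq : (fun x : ℝ ↦ (sign x : ℝ))
      = fun x ↦ if 0 < x then 1 else if x < 0 then -1 else 0 := by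
    funext x
    rw [sign_apply]
    split_ifs <;> simp
  rw [coe_sign_eq]
  exact .ite measurableSet_Ioi measurable_const
    (.ite measurableSet_Iio measurable_const measurable_const)

lemma abs_coe_sign_le_one (x : ℝ) : |(sign x : ℝ)| ≤ 1 := by
  rcases (sign x).trichotomy with h | h | h <;> simp [h]

lemma sign_mul_mul_mul_self {c : ℝ} (hc : c ≠ 0) (x y : ℝ) :
    sign (c * x * (c * y)) = sign (x * y) := by
  rw [mul_mul_mul_comm, sign_mul, sign_pos (mul_self_pos.2 hc), one_mul]

lemma intervalIntegrable_coe_sign_comp {g : ℝ → ℝ} (hg : Measurable g) (a b : ℝ) :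
    IntervalIntegrable (fun x ↦ (sign (g x) : ℝ)) volume a b :=
  (intervalIntegrable_const (c := (1 : ℝ))).mono_fun
    (measurable_coe_sign.comp hg).aestronglyMeasurable
    (.of_forall fun x ↦ by simpa using abs_coe_sign_le_one (g x))

end Sign

section Clamp

lemma measurable_clamp : Measurable clamp :=
  .ite measurableSet_Iic measurable_const (.ite measurableSet_Iio measurable_id measurable_const)

lemma abs_clamp_le_one (x : ℝ) : |clamp x| ≤ 1 := by
  unfold clamp
  split_ifs <;> rw [abs_le] <;> constructor <;> linarith

lemma clamp_of_le_neg_one {x : ℝ} (hx : x ≤ -1) : clamp x = -1 := if_pos hx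

lemma clamp_of_one_le {x : ℝ} (hx : 1 ≤ x) : clamp x = 1 := by
  rw [clamp, if_neg (by linarith), if_neg hx.not_gt]

lemma tendsto_clamp_mul_atTop (x : ℝ) :
    Tendsto (fun L ↦ clamp (L * x)) atTop (𝓝 (sign x)) := by
  apply tendsto_const_nhds.congr'
  rcases lt_trichotomy x 0 with hx | rfl | hx
  · filter_upwards [(tendsto_id.atTop_mul_const_of_neg hx).eventually_le_atBot (-1)] with L hL
    rw [sign_neg hx, SignType.coe_neg_one]
    exact (clamp_of_le_neg_one hL).symm
  · simp [clamp]
  · filter_upwards [(tendsto_id.atTop_mul_const hx).eventually_ge_atTop 1] with L hL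
    rw [sign_pos hx, SignType.coe_one]
    exact (clamp_of_one_le hL).symm

end Clamp

lemma tendsto_integral_mul_of_tendsto_sign {Ω : Type*} {mΩ : MeasurableSpace Ω} {μ : Measure Ω}
    [IsFiniteMeasure μ] {φ : ℝ → ℝ} {C : ℝ} (hφ : Measurable φ) (hφ_le : ∀ x, |φ x| ≤ C)
    (hφ_lim : ∀ x, Tendsto (fun L ↦ φ (L * x)) atTop (𝓝 (sign x)))
    {X Y : Ω → ℝ} (hX : AEMeasurable X μ) (hY : AEMeasurable Y μ) :
    Tendsto (fun L ↦ ∫ ω, φ (L * X ω) * φ (L * Y ω) ∂μ) atTop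
      (𝓝 (∫ ω, (sign (X ω * Y ω) : ℝ) ∂μ)) := by
  refine tendsto_integral_filter_of_dominated_convergence (fun _ ↦ C * C)
    (.of_forall fun L ↦ ?_) (.of_forall fun L ↦ .of_forall fun ω ↦ ?_) (integrable_const _)
    (.of_forall fun ω ↦ ?_)
  · exact ((hφ.comp_aemeasurable (hX.const_mul L)).mul
      (hφ.comp_aemeasurable (hY.const_mul L))).aestronglyMeasurable
  · rw [norm_mul]
    exact mul_le_mul (hφ_le _) (hφ_le _) (abs_nonneg _) ((abs_nonneg _).trans (hφ_le 0))
  · rw [sign_mul, SignType.coe_mul]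
    exact (hφ_lim (X ω)).mul (hφ_lim (Y ω))

section GaussianPlane

variable {E : Type*} [NormedAddCommGroup E] [NormedSpace ℝ E] {v : ℝ≥0}

lemma integral_mul_exp_neg_mul_sq {b : ℝ} (hb : 0 < b) :
    ∫ r in Ioi (0 : ℝ), r * Real.exp (-b * r ^ 2) = (2 * b)⁻¹ := by
  have h := integral_mul_cexp_neg_mul_sq (b := b) (by simpa using hb)
  exact_mod_cast h

lemma gaussianPDFReal_zero_mul_gaussianPDFReal_zero (v : ℝ≥0) (x y : ℝ) :
    gaussianPDFReal 0 v x * gaussianPDFReal 0 v y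
      = (2 * π * v)⁻¹ * Real.exp (-(2 * v : ℝ)⁻¹ * (x ^ 2 + y ^ 2)) := by
  simp only [gaussianPDFReal, sub_zero]
  rw [mul_mul_mul_comm, ← mul_inv, Real.mul_self_sqrt (by positivity), ← Real.exp_add]
  ring_nf

lemma integral_gaussianReal_prod_gaussianReal (hv : v ≠ 0) (f : ℝ × ℝ → E) :
    ∫ p, f p ∂(gaussianReal 0 v).prod (gaussianReal 0 v)
      = ∫ p : ℝ × ℝ, ((2 * π * v)⁻¹ * Real.exp (-(2 * v : ℝ)⁻¹ * (p.1 ^ 2 + p.2 ^ 2))) • f p := by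
  have hpdf := measurable_gaussianPDF 0 v
  rw [gaussianReal_of_var_ne_zero 0 hv, prod_withDensity hpdf hpdf,
    integral_withDensity_eq_integral_toReal_smul (by fun_prop)
      (.of_forall fun p ↦ ENNReal.mul_lt_top gaussianPDF_lt_top gaussianPDF_lt_top),
    ← Measure.volume_eq_prod]
  simp only [ENNReal.toReal_mul, toReal_gaussianPDF, gaussianPDFReal_zero_mul_gaussianPDFReal_zero]

lemma integral_gaussianReal_prod_gaussianReal_of_smul_invariant (hv : v ≠ 0) {f : ℝ × ℝ → E}
    (hf : ∀ r : ℝ, 0 < r → ∀ p, f (r • p) = f p) :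
    ∫ p, f p ∂(gaussianReal 0 v).prod (gaussianReal 0 v)
      = (2 * π)⁻¹ • ∫ θ in -π..π, f (Real.cos θ, Real.sin θ) := by
  have integrand_polar : ∀ p ∈ polarCoord.target,
      p.1 • ((2 * π * v)⁻¹ * Real.exp (-(2 * v : ℝ)⁻¹ *
        ((polarCoord.symm p).1 ^ 2 + (polarCoord.symm p).2 ^ 2))) • f (polarCoord.symm p)
      = (2 * π * v)⁻¹ • (p.1 * Real.exp (-(2 * v : ℝ)⁻¹ * p.1 ^ 2)) •
          f (Real.cos p.2, Real.sin p.2) := by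
    rintro ⟨r, θ⟩ ⟨hr, -⟩
    have hf_polar : f (r * Real.cos θ, r * Real.sin θ) = f (Real.cos θ, Real.sin θ) :=
      hf r hr (Real.cos θ, Real.sin θ)
    have hsq : (r * Real.cos θ) ^ 2 + (r * Real.sin θ) ^ 2 = r ^ 2 := by
      linear_combination r ^ 2 * Real.cos_sq_add_sin_sq θ
    simp only [polarCoord_symm_apply, hf_polar, hsq, smul_smul]
    congr 1
    ring
  rw [integral_gaussianReal_prod_gaussianReal hv, ← integral_comp_polarCoord_symm,
    setIntegral_congr_fun polarCoord.open_target.measurableSet integrand_polar, integral_smul,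
    polarCoord_target, Measure.volume_eq_prod, ← Measure.prod_restrict,
    integral_prod_smul (fun r ↦ r * Real.exp (-(2 * v : ℝ)⁻¹ * r ^ 2))
      (fun θ ↦ f (Real.cos θ, Real.sin θ)),
    integral_mul_exp_neg_mul_sq (by positivity), smul_smul,
    intervalIntegral.integral_of_le (by linarith [Real.pi_pos]), integral_Ioc_eq_integral_Ioo]
  congr 1
  field_simp

end GaussianPlane

section SheppardFormula

variable {α ρ : ℝ} {v : ℝ≥0}

lemma integral_sign_cos_mul_sin_add_neg_pi_div_two_pi_div_two (hα : α ∈ Icc (-(π / 2)) (π / 2)) :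
    ∫ θ in -(π / 2)..π / 2, (sign (Real.cos θ * Real.sin (θ + α)) : ℝ) = 2 * α := by
  have hint := intervalIntegrable_coe_sign_comp
    (g := fun θ ↦ Real.cos θ * Real.sin (θ + α)) (by fun_prop)
  obtain ⟨hα_lower, hα_upper⟩ := hα
  have neg_below : ∫ θ in -(π / 2)..-α, (sign (Real.cos θ * Real.sin (θ + α)) : ℝ)
      = ∫ _ in -(π / 2)..-α, (-1 : ℝ) := by
    refine intervalIntegral.integral_congr_Ioo_of_le (by linarith) fun θ ⟨h₁, h₂⟩ ↦ ?_
    have hcos : 0 < Real.cos θ := Real.cos_pos_of_mem_Ioo ⟨h₁, by linarith⟩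
    have hsin : Real.sin (θ + α) < 0 :=
      Real.sin_neg_of_neg_of_neg_pi_lt (by linarith) (by linarith)
    simp [sign_neg (mul_neg_of_pos_of_neg hcos hsin)]
  have pos_above : ∫ θ in -α..π / 2, (sign (Real.cos θ * Real.sin (θ + α)) : ℝ)
      = ∫ _ in -α..π / 2, (1 : ℝ) := by
    refine intervalIntegral.integral_congr_Ioo_of_le (by linarith) fun θ ⟨h₁, h₂⟩ ↦ ?_
    have hcos : 0 < Real.cos θ := Real.cos_pos_of_mem_Ioo ⟨by linarith, h₂⟩
    have hsin : 0 < Real.sin (θ + α) := Real.sin_pos_of_pos_of_lt_pi (by linarith) (by linarith)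
    simp [sign_pos (mul_pos hcos hsin)]
  rw [← intervalIntegral.integral_add_adjacent_intervals (hint _ (-α)) (hint _ _), neg_below,
    pos_above, intervalIntegral.integral_const, intervalIntegral.integral_const]
  simp only [smul_eq_mul]
  ring

lemma integral_sign_cos_mul_sin_add (hα : α ∈ Icc (-(π / 2)) (π / 2)) :
    ∫ θ in -π..π, (sign (Real.cos θ * Real.sin (θ + α)) : ℝ) = 4 * α := by
  have hper : Function.Periodic (fun θ ↦ (sign (Real.cos θ * Real.sin (θ + α)) : ℝ)) π :=
    fun θ ↦ by simp only [add_right_comm, Real.cos_add_pi, Real.sin_add_pi, neg_mul_neg]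
  have hint := intervalIntegrable_coe_sign_comp
    (g := fun θ ↦ Real.cos θ * Real.sin (θ + α)) (by fun_prop)
  calc ∫ θ in -π..π, (sign (Real.cos θ * Real.sin (θ + α)) : ℝ)
      = ∫ θ in -π..-π + (2 : ℤ) • π, (sign (Real.cos θ * Real.sin (θ + α)) : ℝ) := by
        congr 1
        simp only [zsmul_eq_mul, Int.cast_ofNat]
        ring
    _ = (2 : ℤ) • ∫ θ in -π..-π + π, (sign (Real.cos θ * Real.sin (θ + α)) : ℝ) :=
        hper.intervalIntegral_add_zsmul_eq 2 (-π) hint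
    _ = (2 : ℤ) • ∫ θ in -(π / 2)..-(π / 2) + π, (sign (Real.cos θ * Real.sin (θ + α)) : ℝ) := by
        rw [hper.intervalIntegral_add_eq (-π) (-(π / 2))]
    _ = 4 * α := by
        rw [show -(π / 2) + π = π / 2 by ring,
          integral_sign_cos_mul_sin_add_neg_pi_div_two_pi_div_two hα, zsmul_eq_mul]
        push_cast
        ring

/-- Sheppard's formula. -/
theorem integral_sign_mul_gaussianReal_prod_gaussianReal (hv : v ≠ 0) (hρ : ρ ∈ Icc (-1) 1) :
    ∫ p : ℝ × ℝ, (sign (p.1 * (ρ * p.1 + √(1 - ρ ^ 2) * p.2)) : ℝ)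
      ∂(gaussianReal 0 v).prod (gaussianReal 0 v) = 2 / π * Real.arcsin ρ := by
  have smul_invariant (r : ℝ) (hr : 0 < r) (p : ℝ × ℝ) :
      sign ((r • p).1 * (ρ * (r • p).1 + √(1 - ρ ^ 2) * (r • p).2))
        = sign (p.1 * (ρ * p.1 + √(1 - ρ ^ 2) * p.2)) := by
    rw [← sign_mul_mul_mul_self hr.ne' p.1]
    simp only [Prod.smul_fst, Prod.smul_snd, smul_eq_mul]
    ring_nf
  have sin_add_arcsin (θ : ℝ) :
      ρ * Real.cos θ + √(1 - ρ ^ 2) * Real.sin θ = Real.sin (θ + Real.arcsin ρ) := by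
    rw [Real.sin_add, Real.sin_arcsin hρ.1 hρ.2, Real.cos_arcsin]
    ring
  rw [integral_gaussianReal_prod_gaussianReal_of_smul_invariant hv fun r hr p ↦
    congrArg SignType.cast (smul_invariant r hr p)]
  simp only [sin_add_arcsin]
  rw [integral_sign_cos_mul_sin_add (Real.arcsin_mem_Icc ρ), smul_eq_mul]
  field_simp
  norm_num

end SheppardFormula

theorem stmt_11_general {Ω : Type*} {mΩ : MeasurableSpace Ω} {μ : Measure Ω} {φ : ℝ → ℝ} {C : ℝ}
    (hφ : Measurable φ) (hφ_le : ∀ x, |φ x| ≤ C)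
    (hφ_lim : ∀ x, Tendsto (fun L ↦ φ (L * x)) atTop (𝓝 (sign x)))
    {Z₁ Z₂ : Ω → ℝ} (hindep : IndepFun Z₁ Z₂ μ) (hlaw₁ : HasLaw Z₁ (gaussianReal 0 1) μ)
    (hlaw₂ : HasLaw Z₂ (gaussianReal 0 1) μ) {σ : ℝ} (hσ : σ ≠ 0) {ρ : ℝ}
    (hρ : ρ ∈ Icc (-1) 1) :
    Tendsto (fun L ↦ ∫ ω, φ (L * (σ * Z₁ ω)) * φ (L * (σ * (ρ * Z₁ ω + √(1 - ρ ^ 2) * Z₂ ω))) ∂μ)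
      atTop (𝓝 (2 / π * Real.arcsin ρ)) := by
  have : IsProbabilityMeasure μ := hlaw₁.isProbabilityMeasure
  have hZ₁ : AEMeasurable Z₁ μ := hlaw₁.aemeasurable
  have hZ₂ : AEMeasurable Z₂ μ := hlaw₂.aemeasurable
  have hY : AEMeasurable (fun ω ↦ σ * (ρ * Z₁ ω + √(1 - ρ ^ 2) * Z₂ ω)) μ := by fun_prop
  have hlim := tendsto_integral_mul_of_tendsto_sign hφ hφ_le hφ_lim (hZ₁.const_mul σ) hY
  have hmeas : Measurable fun p : ℝ × ℝ ↦ (sign (p.1 * (ρ * p.1 + √(1 - ρ ^ 2) * p.2)) : ℝ) :=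
    measurable_coe_sign.comp (by fun_prop)
  rw [← integral_sign_mul_gaussianReal_prod_gaussianReal one_ne_zero hρ,
    ← (hindep.hasLaw_prod hlaw₁ hlaw₂).integral_comp hmeas.aestronglyMeasurable]
  simpa only [sign_mul_mul_mul_self hσ, Function.comp_def] using hlim

theorem stmt_11 {Ω : Type*} [MeasureSpace Ω] [IsProbabilityMeasure (volume : Measure Ω)]
    (Z₁ Z₂ : Ω → ℝ) (hZ₁ : Measurable Z₁) (hZ₂ : Measurable Z₂)
    (hindep : IndepFun Z₁ Z₂ volume)
    (hlaw₁ : Measure.map Z₁ volume = gaussianReal 0 1)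
    (hlaw₂ : Measure.map Z₂ volume = gaussianReal 0 1)
    (σ : ℝ) (hσ : 0 < σ) (ρ : ℝ) (hρ : ρ ∈ Set.Icc (-1 : ℝ) 1) :
    Tendsto
      (fun L : ℝ => ∫ ω, clamp (L * (σ * Z₁ ω)) *
        clamp (L * (σ * (ρ * Z₁ ω + Real.sqrt (1 - ρ ^ 2) * Z₂ ω))))
      atTop (nhds ((2 / Real.pi) * Real.arcsin ρ)) :=
  stmt_11_general measurable_clamp abs_clamp_le_one tendsto_clamp_mul_atTop hindep
    ⟨hZ₁.aemeasurable, hlaw₁⟩ ⟨hZ₂.aemeasurable, hlaw₂⟩ hσ.ne' hρ
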